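/- A 5-tuple (k₁,k₂,k₃,k₄,k₅) of nonnegative integers is realized as the canonical invariants of some coisotropic pair (A,B) in some symplectic vector space (V,ω) if and only if it satisfies the inequalities 0 ≤ k₁ ≤ k₅ ≤ k₂ and k₁ + k₂ ≤ k₃ + k₅ ≤ k₁ + k₄. -/

import Mathlib

open Submodule Module

/-- The ω-orthogonal of a subspace: `W^ω = {v | ω(v,u) = 0 for all u ∈ W}`. -/
def oOrtho {V : Type*} [AddCommGroup V] [Module ℝ V]
    (ω : V →ₗ[ℝ] V →ₗ[ℝ] ℝ) (W : Submodule ℝ V) : Submodule ℝ V where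
  carrier := {v | ∀ u ∈ W, ω v u = 0}
  add_mem' := by
    intro a b ha hb u hu
    rw [Set.mem_setOf_eq] at *
    rw [map_add, LinearMap.add_apply, ha u hu, hb u hu, add_zero]
  zero_mem' := by intro u _; simp
  smul_mem' := by
    intro c a ha u hu
    rw [Set.mem_setOf_eq] at *
    rw [map_smul, LinearMap.smul_apply, ha u hu, smul_zero]

lemma oOrtho_eq {V : Type*} [AddCommGroup V] [Module ℝ V]
    (ω : V →ₗ[ℝ] V →ₗ[ℝ] ℝ) (h : ω.IsAlt) (W : Submodule ℝ V) :
    oOrtho ω W = LinearMap.BilinForm.orthogonal ω W := by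
  ext v
  constructor
  · intro hv u hu
    exact h.isRefl _ _ (hv u hu)
  · intro hv u hu
    exact h.isRefl _ _ (hv u hu)

lemma finrank_oOrtho {V : Type*} [AddCommGroup V] [Module ℝ V] [FiniteDimensional ℝ V]
    (ω : V →ₗ[ℝ] V →ₗ[ℝ] ℝ) (h : ω.IsAlt) (hn : ω.Nondegenerate) (W : Submodule ℝ V) :
    finrank ℝ (oOrtho ω W) + finrank ℝ W = finrank ℝ V := by
  rw [oOrtho_eq ω h, LinearMap.BilinForm.finrank_orthogonal hn]
  have := Submodule.finrank_le W
  omega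

lemma stmt_forward {V : Type*} [AddCommGroup V] [Module ℝ V] [FiniteDimensional ℝ V]
    (ω : V →ₗ[ℝ] V →ₗ[ℝ] ℝ) (h : ω.IsAlt) (hn : ω.Nondegenerate) (A B : Submodule ℝ V)
    (hA : oOrtho ω A ≤ A) (hB : oOrtho ω B ≤ B) (k : ℕ) (hk : finrank ℝ V = 2 * k) :
    finrank ℝ (oOrtho ω A ⊓ oOrtho ω B : Submodule ℝ V)
        ≤ finrank ℝ (oOrtho ω A ⊓ B : Submodule ℝ V) ∧
    finrank ℝ (oOrtho ω A ⊓ B : Submodule ℝ V) ≤ finrank ℝ (oOrtho ω A) ∧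
    finrank ℝ (oOrtho ω A ⊓ oOrtho ω B : Submodule ℝ V) + finrank ℝ (oOrtho ω A)
      ≤ finrank ℝ (oOrtho ω B) + finrank ℝ (oOrtho ω A ⊓ B : Submodule ℝ V) ∧
    finrank ℝ (oOrtho ω B) + finrank ℝ (oOrtho ω A ⊓ B : Submodule ℝ V)
      ≤ finrank ℝ (oOrtho ω A ⊓ oOrtho ω B : Submodule ℝ V) + k := by
  refine ⟨Submodule.finrank_mono (inf_le_inf_left _ hB), Submodule.finrank_mono inf_le_left,
    ?_, ?_⟩
  · have h1 : oOrtho ω A ⊔ B ≤ oOrtho ω (oOrtho ω A ⊓ oOrtho ω B) := by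
      refine sup_le ?_ ?_
      · intro v hv u hu
        exact hv u (hA hu.1)
      · intro v hv u hu
        exact h.isRefl _ _ (hu.2 v hv)
    have h2 := Submodule.finrank_mono h1
    have h3 := finrank_oOrtho ω h hn (oOrtho ω A ⊓ oOrtho ω B)
    have h4 := Submodule.finrank_sup_add_finrank_inf_eq (oOrtho ω A) B
    have h5 := finrank_oOrtho ω h hn B
    omega
  · have h1 : oOrtho ω B ⊔ (oOrtho ω A ⊓ B) ≤ oOrtho ω (oOrtho ω B ⊔ (oOrtho ω A ⊓ B)) := by
      refine sup_le ?_ ?_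
      · intro v hv u hu
        obtain ⟨y, hy, z, hz, rfl⟩ := Submodule.mem_sup.1 hu
        rw [map_add, hv y (hB hy), hv z hz.2, add_zero]
      · intro v hv u hu
        obtain ⟨y, hy, z, hz, rfl⟩ := Submodule.mem_sup.1 hu
        rw [map_add, h.isRefl _ _ (hy v hv.2), hv.1 z (hA hz.1), add_zero]
    have h2 := Submodule.finrank_mono h1
    have h3 := finrank_oOrtho ω h hn (oOrtho ω B ⊔ (oOrtho ω A ⊓ B))
    have h4 := Submodule.finrank_sup_add_finrank_inf_eq (oOrtho ω B) (oOrtho ω A ⊓ B)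
    have h5 : oOrtho ω B ⊓ (oOrtho ω A ⊓ B) = oOrtho ω A ⊓ oOrtho ω B := by
      apply le_antisymm
      · exact fun v hv => ⟨hv.2.1, hv.1⟩
      · exact fun v hv => ⟨hv.2, hv.1, hB hv.2⟩
    rw [h5] at h4
    omega

/-- coordinate subspace -/
def coordSub {ι : Type*} (S : ι → Bool) : Submodule ℝ (ι → ℝ) where
  carrier := {v | ∀ i, S i = false → v i = 0}
  add_mem' := by
    intro a b ha hb i hi
    simp [ha i hi, hb i hi]
  zero_mem' := by intro i _; rfl
  smul_mem' := by
    intro c a ha i hi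
    simp [ha i hi]

/-- coordinates on a coordinate subspace -/
def coordEquiv {ι : Type*} (S : ι → Bool) : coordSub S ≃ₗ[ℝ] ({i // S i = true} → ℝ) where
  toFun v := fun i => v.1 i.1
  map_add' _ _ := rfl
  map_smul' _ _ := rfl
  invFun f := ⟨fun i => if h : S i = true then f ⟨i, h⟩ else 0, by
    intro i hi
    simp [hi]⟩
  left_inv v := by
    ext i
    by_cases h : S i = true
    · simp [h]
    · have := v.2 i (by simpa using h)
      simp [h, this]
  right_inv f := by
    ext i
    simp [i.2]

lemma finrank_coordSub {ι : Type*} [Fintype ι] (S : ι → Bool) :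
    finrank ℝ (coordSub S) = ∑ i, if S i = true then 1 else 0 := by
  rw [(coordEquiv S).finrank_eq, Module.finrank_fintype_fun_eq_card, Fintype.card_subtype,
    Finset.card_filter]

lemma coordSub_inf {ι : Type*} (S T : ι → Bool) :
    coordSub S ⊓ coordSub T = coordSub (fun i => S i && T i) := by
  ext v
  constructor
  · rintro ⟨h1, h2⟩ i hi
    rcases Bool.and_eq_false_iff.1 hi with h | h
    · exact h1 i h
    · exact h2 i h
  · intro hv
    exact ⟨fun i hi => hv i (by simp [hi]), fun i hi => hv i (by simp [hi])⟩

/-- standard symplectic form -/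
def stdForm (κ : Type*) [Fintype κ] :
    (κ × Bool → ℝ) →ₗ[ℝ] (κ × Bool → ℝ) →ₗ[ℝ] ℝ :=
  LinearMap.mk₂ ℝ (fun v w => ∑ i, (v (i, false) * w (i, true) - v (i, true) * w (i, false)))
    (by intro a b c; rw [← Finset.sum_add_distrib]; congr 1; ext i; simp; ring)
    (by intro a b c; rw [smul_eq_mul, Finset.mul_sum]; congr 1; ext i; simp; ring)
    (by intro a b c; rw [← Finset.sum_add_distrib]; congr 1; ext i; simp; ring)
    (by intro a b c; rw [smul_eq_mul, Finset.mul_sum]; congr 1; ext i; simp; ring)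

lemma stdForm_apply {κ : Type*} [Fintype κ] (v w : κ × Bool → ℝ) :
    stdForm κ v w = ∑ i, (v (i, false) * w (i, true) - v (i, true) * w (i, false)) := rfl

lemma stdForm_alt (κ : Type*) [Fintype κ] : (stdForm κ).IsAlt := by
  intro v
  rw [stdForm_apply]
  exact Finset.sum_eq_zero (fun i _ => by ring)

lemma stdForm_single_true {κ : Type*} [Fintype κ] [DecidableEq κ] (v : κ × Bool → ℝ) (i : κ) :
    stdForm κ v (Pi.single (i, true) 1) = v (i, false) := by
  simp [stdForm_apply, Pi.single_apply]

lemma stdForm_single_false {κ : Type*} [Fintype κ] [DecidableEq κ] (v : κ × Bool → ℝ) (i : κ) :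
    stdForm κ v (Pi.single (i, false) 1) = - v (i, true) := by
  simp [stdForm_apply, Pi.single_apply]

lemma stdForm_nondeg (κ : Type*) [Fintype κ] : (stdForm κ).Nondegenerate := by
  classical
  rw [(stdForm_alt κ).isRefl.nondegenerate_iff_separatingLeft]
  intro v hv
  ext ⟨i, b⟩
  cases b
  · have := stdForm_single_true v i
    rw [hv] at this
    simpa using this.symm
  · have := stdForm_single_false v i
    rw [hv] at this
    simpa using this.symm

lemma oOrtho_coordSub {κ : Type*} [Fintype κ] (S : κ × Bool → Bool) :
    oOrtho (stdForm κ) (coordSub S) = coordSub (fun p => !S (p.1, !p.2)) := by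
  classical
  ext v
  constructor
  · rintro hv ⟨i, b⟩ hi
    have hS : S (i, !b) = true := by simpa using hi
    have hm : (Pi.single (i, !b) 1 : κ × Bool → ℝ) ∈ coordSub S := by
      intro j hj
      refine Pi.single_eq_of_ne ?_ _
      rintro rfl
      simp [hS] at hj
    have h0 := hv _ hm
    cases b
    · exact (stdForm_single_true v i).symm.trans h0
    · have := (stdForm_single_false v i).symm.trans h0
      simpa using this
  · intro hv u hu
    rw [stdForm_apply]
    refine Finset.sum_eq_zero (fun i _ => ?_)
    have key : ∀ b, v (i, b) * u (i, !b) = 0 := by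
      intro b
      cases hS : S (i, !b)
      · rw [hu _ hS, mul_zero]
      · rw [hv (i, b) (by simp [hS]), zero_mul]
    have h1 := key false
    have h2 := key true
    simp only [Bool.not_false, Bool.not_true] at h1 h2
    rw [h1, h2, sub_zero]

/-- index set for the model, in five blocks -/
abbrev Blocks (a b c d e : ℕ) : Type := Fin a ⊕ Fin b ⊕ Fin c ⊕ Fin d ⊕ Fin e

/-- coordinates of the model `A` -/
def setA (a b c d e : ℕ) : Blocks a b c d e × Bool → Bool
  | (.inl _, t) => !t
  | (.inr (.inl _), t) => !t
  | (.inr (.inr (.inl _)), t) => !t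
  | (.inr (.inr (.inr (.inl _))), _) => true
  | (.inr (.inr (.inr (.inr _))), _) => true

/-- coordinates of the model `B` -/
def setB (a b c d e : ℕ) : Blocks a b c d e × Bool → Bool
  | (.inl _, t) => !t
  | (.inr (.inl _), _) => true
  | (.inr (.inr (.inl _)), t) => t
  | (.inr (.inr (.inr (.inl _))), t) => !t
  | (.inr (.inr (.inr (.inr _))), _) => true

lemma coordSub_mono {ι : Type*} {S T : ι → Bool} (h : ∀ i, T i = false → S i = false) :
    coordSub S ≤ coordSub T := fun _ hv i hi => hv i (h i hi)

/-- a 5-tuple `(k₁,…,k₅)` of nonnegative integers is the tuple of canonical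
invariants of some coisotropic pair `(A,B)` in some symplectic vector space `(V,ω)` iff
`0 ≤ k₁ ≤ k₅ ≤ k₂` and `k₁ + k₂ ≤ k₃ + k₅ ≤ k₁ + k₄`. -/
theorem stmt19 (k₁ k₂ k₃ k₄ k₅ : ℕ) :
    (∃ (V : Type) (_ : AddCommGroup V) (_ : Module ℝ V) (_ : FiniteDimensional ℝ V)
        (ω : V →ₗ[ℝ] V →ₗ[ℝ] ℝ) (A B : Submodule ℝ V),
      ω.IsAlt ∧ ω.Nondegenerate ∧
      oOrtho ω A ≤ A ∧ oOrtho ω B ≤ B ∧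
      Module.finrank ℝ (oOrtho ω A ⊓ oOrtho ω B : Submodule ℝ V) = k₁ ∧
      Module.finrank ℝ (oOrtho ω A) = k₂ ∧
      Module.finrank ℝ (oOrtho ω B) = k₃ ∧
      Module.finrank ℝ V = 2 * k₄ ∧
      Module.finrank ℝ (oOrtho ω A ⊓ B : Submodule ℝ V) = k₅) ↔
    (k₁ ≤ k₅ ∧ k₅ ≤ k₂ ∧ k₁ + k₂ ≤ k₃ + k₅ ∧ k₃ + k₅ ≤ k₁ + k₄) := by
  constructor
  · rintro ⟨V, _, _, _, ω, A, B, h, hn, hA, hB, rfl, rfl, rfl, hk, rfl⟩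
    exact stmt_forward ω h hn A B hA hB k₄ hk
  · rintro ⟨h1, h2, h3, h4⟩
    obtain ⟨b, rfl⟩ := Nat.exists_eq_add_of_le h1
    obtain ⟨c, rfl⟩ := Nat.exists_eq_add_of_le h2
    obtain ⟨d, rfl⟩ : ∃ d, k₃ = k₁ + c + d := ⟨k₃ - k₁ - c, by omega⟩
    obtain ⟨e, rfl⟩ : ∃ e, k₄ = k₁ + b + c + d + e := ⟨k₄ - (k₁ + b + c + d), by omega⟩
    refine ⟨Blocks k₁ b c d e × Bool → ℝ, inferInstance, inferInstance, inferInstance,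
      stdForm _, coordSub (setA k₁ b c d e), coordSub (setB k₁ b c d e),
      stdForm_alt _, stdForm_nondeg _, ?_, ?_, ?_, ?_, ?_, ?_, ?_⟩
    · rw [oOrtho_coordSub]
      apply coordSub_mono
      rintro ⟨i | i | i | i | i, _ | _⟩ <;> simp [setA]
    · rw [oOrtho_coordSub]
      apply coordSub_mono
      rintro ⟨i | i | i | i | i, _ | _⟩ <;> simp [setB]
    · rw [oOrtho_coordSub, oOrtho_coordSub, coordSub_inf, finrank_coordSub]
      simp only [Fintype.sum_prod_type, Fintype.sum_sum_type, Fintype.sum_bool]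
      simp [setA, setB]
    · rw [oOrtho_coordSub, finrank_coordSub]
      simp only [Fintype.sum_prod_type, Fintype.sum_sum_type, Fintype.sum_bool]
      simp [setA]
      try omega
    · rw [oOrtho_coordSub, finrank_coordSub]
      simp only [Fintype.sum_prod_type, Fintype.sum_sum_type, Fintype.sum_bool]
      simp [setB]
      try omega
    · rw [Module.finrank_fintype_fun_eq_card]
      simp
      ring
    · rw [oOrtho_coordSub, coordSub_inf, finrank_coordSub]
      simp only [Fintype.sum_prod_type, Fintype.sum_sum_type, Fintype.sum_bool]
      simp [setA, setB]
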